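/- Let p, q ≥ 1, let A_1,…,A_p, B_1,…,B_q be strictly positive and a_1,…,a_p, b_1,…,b_q be strictly positive reals, set W(x) = ∏_{i=1}^p Γ(A_i x + a_i) / ∏_{j=1}^q Γ(B_j x + b_j), and P(u) = Σ_{i=1}^p e^{−a_i u/A_i}/(1 − e^{−u/A_i}) − Σ_{j=1}^q e^{−b_j u/B_j}/(1 − e^{−u/B_j}) for u > 0. Then the function x ↦ (log W)′(x) = Σ_{i=1}^p A_i ψ(A_i x + a_i) − Σ_{j=1}^q B_j ψ(B_j x + b_j) is a Bernstein function on (0,∞) if and only if P(u) ≥ 0 for all u > 0 and Σ_{i=1}^p A_i ψ(a_i) − Σ_{j=1}^q B_j ψ(b_j) ≥ 0. -/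

import Mathlib

open MeasureTheory

/-- A function `f` is completely monotonic on `(0,∞)` if it is infinitely
differentiable there and `(-1)^n f^(n)(x) ≥ 0` for all `n ≥ 0` and `x > 0`. -/
def CompletelyMonotonicOn (f : ℝ → ℝ) : Prop :=
  (∀ x > (0 : ℝ), ContDiffAt ℝ (⊤ : ℕ∞) f x) ∧
    ∀ (n : ℕ), ∀ x > (0 : ℝ), 0 ≤ (-1 : ℝ) ^ n * iteratedDeriv n f x

/-- A function `f` is a Bernstein function on `(0,∞)` if `f ≥ 0` there and
`f'` is completely monotonic on `(0,∞)`. -/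
def BernsteinOn (f : ℝ → ℝ) : Prop :=
  (∀ x > (0 : ℝ), 0 ≤ f x) ∧ CompletelyMonotonicOn (deriv f)

/-!
On `(0, ∞)` the derivative of `(log W)'` is the Laplace transform of `u ↦ u P(u)`, because Gauss'
formula `ψ(x) = -γ + ∫₀^∞ (e^{-t} - e^{-xt}) / (1 - e^{-t}) dt` gives
`ψ'(x) = ∫₀^∞ e^{-xt} t / (1 - e^{-t}) dt`. A Laplace transform of a continuous density is
completely monotonic exactly when the density is nonnegative: differentiating `n` times multiplies
the density by `(-t)^n`, and the Post–Widder inversion formula recovers the density from these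
derivatives. Once `(log W)'` is nondecreasing, its nonnegativity on `(0, ∞)` is the nonnegativity
of its value at `0`.
-/

section LaplaceTransform

open Set Filter Topology Real

variable {g w : ℝ → ℝ} {x y u : ℝ}

/-- The Laplace transform of a density `g` on `(0, ∞)`, with junk value `0` where the defining
integral diverges. -/
noncomputable def laplace (g : ℝ → ℝ) (x : ℝ) : ℝ :=
  ∫ t in Ioi 0, exp (-(x * t)) * g t

/-- Absolute convergence of the Laplace transform of `g` at every point of `(0, ∞)`. -/
def LaplaceConvergent (g : ℝ → ℝ) : Prop :=
  ∀ x > 0, IntegrableOn (fun t ↦ exp (-(x * t)) * g t) (Ioi 0)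

theorem laplace_nonneg (hg : ∀ t > 0, 0 ≤ g t) (x : ℝ) : 0 ≤ laplace g x :=
  setIntegral_nonneg measurableSet_Ioi fun t ht ↦ mul_nonneg (exp_pos _).le (hg t ht)

theorem laplaceConvergent_one : LaplaceConvergent fun _ ↦ 1 := fun x hx ↦ by
  simpa only [mul_one, neg_mul] using integrableOn_exp_mul_Ioi (neg_lt_zero.2 hx) 0

theorem LaplaceConvergent.mono (hw : LaplaceConvergent w) (hg : ContinuousOn g (Ioi 0))
    (hgw : ∀ t > 0, |g t| ≤ w t) : LaplaceConvergent g := fun x hx ↦ by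
  refine (hw x hx).mono' (ContinuousOn.aestronglyMeasurable (by fun_prop) measurableSet_Ioi) ?_
  filter_upwards [ae_restrict_mem measurableSet_Ioi] with t ht
  rw [norm_mul, norm_eq_abs, abs_exp, norm_eq_abs]
  exact mul_le_mul_of_nonneg_left (hgw t ht) (exp_pos _).le

theorem LaplaceConvergent.add (hg : LaplaceConvergent g) (hw : LaplaceConvergent w) :
    LaplaceConvergent fun t ↦ g t + w t := fun x hx ↦ by
  simp only [mul_add]
  exact (hg x hx).add (hw x hx)

theorem LaplaceConvergent.sum {ι : Type*} {s : Finset ι} {g : ι → ℝ → ℝ}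
    (hg : ∀ i ∈ s, LaplaceConvergent (g i)) : LaplaceConvergent fun t ↦ ∑ i ∈ s, g i t :=
  fun x hx ↦ by
    simp only [Finset.mul_sum]
    exact integrable_finsetSum s fun i hi ↦ hg i hi x hx

theorem laplace_sum {ι : Type*} {s : Finset ι} {g : ι → ℝ → ℝ}
    (hg : ∀ i ∈ s, LaplaceConvergent (g i)) (hx : 0 < x) :
    laplace (fun t ↦ ∑ i ∈ s, g i t) x = ∑ i ∈ s, laplace (g i) x := by
  simp only [laplace, Finset.mul_sum]
  exact integral_finsetSum s fun i hi ↦ hg i hi x hx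

theorem LaplaceConvergent.const_mul (hg : LaplaceConvergent g) (c : ℝ) :
    LaplaceConvergent fun t ↦ c * g t := fun x hx ↦ by
  simp only [mul_left_comm _ c]
  exact (hg x hx).const_mul c

theorem laplace_const_mul (c : ℝ) (g : ℝ → ℝ) (x : ℝ) :
    laplace (fun t ↦ c * g t) x = c * laplace g x := by
  simp only [laplace, mul_left_comm _ c, integral_const_mul]

theorem LaplaceConvergent.id_mul (hg : LaplaceConvergent g) :
    LaplaceConvergent fun t ↦ t * g t := fun x hx ↦ by
  have bound : ∀ t > 0, ‖t * exp (-(x / 2 * t))‖ ≤ 2 / x := fun t ht ↦ by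
    rw [norm_of_nonneg (by positivity), exp_neg, ← div_eq_mul_inv, div_le_div_iff₀ (exp_pos _) hx]
    linarith [add_one_le_exp (x / 2 * t)]
  refine ((hg (x / 2) (half_pos hx)).bdd_mul (f := fun t ↦ t * exp (-(x / 2 * t))) (by fun_prop)
    ((ae_restrict_mem measurableSet_Ioi).mono bound)).congr (ae_of_all _ fun t ↦ ?_)
  change t * exp (-(x / 2 * t)) * (exp (-(x / 2 * t)) * g t) = exp (-(x * t)) * (t * g t)
  rw [show -(x * t) = -(x / 2 * t) + -(x / 2 * t) by ring, exp_add]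
  ring

theorem exp_mul_exp_mul_div {A : ℝ} (hA : A ≠ 0) (a x t : ℝ) :
    exp (-(x * (A * t))) * exp (-a * (A * t) / A) = exp (-((A * x + a) * t)) := by
  rw [← exp_add]
  congr 1
  field_simp
  ring

theorem LaplaceConvergent.exp_mul_comp_div (hg : LaplaceConvergent g) {A a : ℝ} (hA : 0 < A)
    (ha : 0 ≤ a) : LaplaceConvergent fun u ↦ exp (-a * u / A) * g (u / A) := fun x hx ↦ by
  have h := hg (A * x + a) (by positivity)
  rw [← mul_zero A, ← integrableOn_Ioi_comp_mul_left_iff _ 0 hA]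
  simpa only [← mul_assoc (exp _), exp_mul_exp_mul_div hA.ne', mul_div_cancel_left₀ _ hA.ne']
    using h

theorem laplace_exp_mul_comp_div (g : ℝ → ℝ) {A : ℝ} (hA : 0 < A) (a x : ℝ) :
    laplace (fun u ↦ exp (-a * u / A) * g (u / A)) x = A * laplace g (A * x + a) := by
  unfold laplace
  rw [← mul_zero A, ← integral_comp_mul_left_Ioi' _ 0 hA, mul_zero, smul_eq_mul]
  simp only [← mul_assoc (exp _), exp_mul_exp_mul_div hA.ne', mul_div_cancel_left₀ _ hA.ne']

section Derivative

theorem LaplaceConvergent.aestronglyMeasurable_of_id_mul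
    (hw : LaplaceConvergent fun t ↦ t * w t) :
    AEStronglyMeasurable w (volume.restrict (Ioi 0)) := by
  have hinv : AEStronglyMeasurable (fun t ↦ t⁻¹ * exp t) (volume.restrict (Ioi 0)) :=
    Measurable.aestronglyMeasurable (by fun_prop)
  refine (hinv.mul (hw 1 one_pos).aestronglyMeasurable).congr ?_
  filter_upwards [ae_restrict_mem measurableSet_Ioi] with t ht
  have ht : t ≠ 0 := ne_of_gt ht
  simp only [Pi.mul_apply, one_mul, exp_neg]
  field_simp

theorem LaplaceConvergent.integrableOn_exp_sub_exp_mul (hw : LaplaceConvergent fun t ↦ t * w t)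
    (hx : 0 < x) (hy : 0 < y) :
    IntegrableOn (fun t ↦ (exp (-(x * t)) - exp (-(y * t))) * w t) (Ioi 0) := by
  wlog hxy : x ≤ y generalizing x y
  · refine (this hy hx (le_of_not_ge hxy)).neg.congr (ae_of_all _ fun t ↦ ?_)
    simp only [Pi.neg_apply]
    ring
  have hmeas := hw.aestronglyMeasurable_of_id_mul
  refine ((hw x hx).norm.const_mul (y - x)).mono' (.mul (by fun_prop) hmeas) ?_
  filter_upwards [ae_restrict_mem measurableSet_Ioi] with t (ht : 0 < t)
  have hexp : exp (-(y * t)) = exp (-(x * t)) * exp (-((y - x) * t)) := by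
    rw [← exp_add]
    ring_nf
  have hnonneg : 0 ≤ exp (-(x * t)) - exp (-(y * t)) := sub_nonneg.2 (by gcongr)
  have hle : exp (-(x * t)) - exp (-(y * t)) ≤ exp (-(x * t)) * ((y - x) * t) := by
    rw [hexp, ← mul_one_sub]
    gcongr
    linarith [one_sub_le_exp_neg ((y - x) * t)]
  calc ‖(exp (-(x * t)) - exp (-(y * t))) * w t‖
      = (exp (-(x * t)) - exp (-(y * t))) * |w t| := by
        rw [norm_mul, norm_of_nonneg hnonneg, norm_eq_abs]
    _ ≤ exp (-(x * t)) * ((y - x) * t) * |w t| := by gcongr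
    _ = (y - x) * ‖exp (-(x * t)) * (t * w t)‖ := by
        rw [norm_mul, norm_mul, norm_eq_abs, abs_exp, norm_of_nonneg ht.le, norm_eq_abs]
        ring

-- Subtracting `exp (-(x * t))` makes the integral converge even when `w` has a pole at `0`.
theorem LaplaceConvergent.hasDerivAt_integral_exp_sub_exp_mul
    (hw : LaplaceConvergent fun t ↦ t * w t) (hx : 0 < x) (hy : 0 < y) :
    HasDerivAt (fun z ↦ ∫ t in Ioi 0, (exp (-(x * t)) - exp (-(z * t))) * w t)
      (laplace (fun t ↦ t * w t) y) y := by
  have hmeas := hw.aestronglyMeasurable_of_id_mul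
  refine (hasDerivAt_integral_of_dominated_loc_of_deriv_le
    (F := fun z t ↦ (exp (-(x * t)) - exp (-(z * t))) * w t)
    (F' := fun z t ↦ exp (-(z * t)) * (t * w t))
    (Ioi_mem_nhds (half_lt_self hy)) (.of_forall fun z ↦ .mul (by fun_prop) hmeas)
    (hw.integrableOn_exp_sub_exp_mul hx hy) (hw y hy).aestronglyMeasurable ?_
    (hw (y / 2) (half_pos hy)).norm (ae_of_all _ fun t z _ ↦ ?_)).2
  · filter_upwards [ae_restrict_mem measurableSet_Ioi] with t (ht : 0 < t) z (hz : y / 2 < z)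
    simp only [norm_mul, norm_eq_abs, abs_exp]
    gcongr
  · have hexp : HasDerivAt (fun z ↦ exp (-(z * t))) (exp (-(z * t)) * -(1 * t)) z :=
      ((hasDerivAt_id z).mul_const t).fun_neg.exp
    exact ((hexp.const_sub _).mul_const (w t)).congr_deriv (by ring)

theorem LaplaceConvergent.hasDerivAt_laplace (hg : LaplaceConvergent g) (hx : 0 < x) :
    HasDerivAt (laplace g) (-laplace (fun t ↦ t * g t) x) x := by
  refine ((hg.id_mul.hasDerivAt_integral_exp_sub_exp_mul hx hx).const_sub
    (laplace g x)).congr_of_eventuallyEq ?_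
  filter_upwards [Ioi_mem_nhds hx] with y hy
  simp only [laplace, sub_mul]
  rw [integral_sub (hg x hx) (hg y hy), sub_sub_cancel]

theorem LaplaceConvergent.contDiffOn_laplace (hg : LaplaceConvergent g) (m : ℕ) :
    ContDiffOn ℝ m (laplace g) (Ioi 0) := by
  induction m generalizing g with
  | zero => exact contDiffOn_zero.2 fun x hx ↦
      (hg.hasDerivAt_laplace hx).continuousAt.continuousWithinAt
  | succ m ih =>
    rw [Nat.cast_succ, contDiffOn_succ_iff_deriv_of_isOpen isOpen_Ioi]
    exact ⟨fun x hx ↦ (hg.hasDerivAt_laplace hx).differentiableAt.differentiableWithinAt,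
      by simp, (ih hg.id_mul).neg.congr fun x hx ↦ (hg.hasDerivAt_laplace hx).deriv⟩

theorem LaplaceConvergent.pow_mul (hg : LaplaceConvergent g) (n : ℕ) :
    LaplaceConvergent fun t ↦ t ^ n * g t := by
  induction n with
  | zero => simpa only [pow_zero, one_mul] using hg
  | succ n ih => simpa only [pow_succ', mul_assoc] using ih.id_mul

theorem LaplaceConvergent.iteratedDeriv_laplace (hg : LaplaceConvergent g) (n : ℕ) (hx : 0 < x) :
    iteratedDeriv n (laplace g) x = (-1) ^ n * laplace (fun t ↦ t ^ n * g t) x := by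
  induction n generalizing x with
  | zero => simp
  | succ n ih =>
    have heq : iteratedDeriv n (laplace g) =ᶠ[𝓝 x]
        fun y ↦ (-1) ^ n * laplace (fun t ↦ t ^ n * g t) y := by
      filter_upwards [Ioi_mem_nhds hx] with y hy using ih hy
    rw [iteratedDeriv_succ, heq.deriv_eq,
      (((hg.pow_mul n).hasDerivAt_laplace hx).const_mul _).deriv]
    simp only [pow_succ', mul_assoc]
    ring

end Derivative

section PostWidder

theorem negMulLog_lt_exp_neg_one {v : ℝ} (hv : 0 ≤ v) (hv' : v ≠ exp (-1)) :
    negMulLog v < exp (-1) := by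
  have hne : exp 1 * v ≠ 1 := fun h ↦ hv' <| by
    rw [exp_neg, eq_inv_of_mul_eq_one_right h]
  have h := negMulLog_lt_one_sub_self (by positivity) hne
  rw [negMulLog_mul, negMulLog, log_exp] at h
  rw [exp_neg, ← one_div, lt_div_iff₀ (exp_pos 1)]
  linarith

theorem image_exp_neg_mul_Ioi {c : ℝ} (hc : 0 < c) :
    (fun t ↦ exp (-(c * t))) '' Ioi 0 = Ioo 0 1 := by
  ext v
  constructor
  · rintro ⟨t, ht : 0 < t, rfl⟩
    exact ⟨exp_pos _, exp_lt_one_iff.2 (neg_lt_zero.2 (mul_pos hc ht))⟩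
  · rintro ⟨hv₀, hv₁⟩
    refine ⟨-log v / c, div_pos (neg_pos.2 (log_neg hv₀ hv₁)) hc, ?_⟩
    simp only [mul_div_cancel₀ _ hc.ne', neg_neg, exp_log hv₀]

theorem hasDerivWithinAt_exp_neg_mul (c t : ℝ) (s : Set ℝ) :
    HasDerivWithinAt (fun t ↦ exp (-(c * t))) (exp (-(c * t)) * -(c * 1)) s t :=
  ((hasDerivAt_id t).const_mul c).fun_neg.exp.hasDerivWithinAt

theorem injective_exp_neg_mul {c : ℝ} (hc : 0 < c) :
    Function.Injective fun t ↦ exp (-(c * t)) := fun s t h ↦ by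
  simpa [hc.ne'] using h

theorem LaplaceConvergent.integrableOn_comp_neg_log_div (hg : LaplaceConvergent g) {c : ℝ}
    (hc : 0 < c) : IntegrableOn (fun v ↦ g (-log v / c)) (Icc 0 1) := by
  rw [integrableOn_Icc_iff_integrableOn_Ioo, ← image_exp_neg_mul_Ioi hc,
    integrableOn_image_iff_integrableOn_abs_deriv_smul measurableSet_Ioi
      (fun t _ ↦ hasDerivWithinAt_exp_neg_mul c t _) (injective_exp_neg_mul hc).injOn]
  refine ((hg c hc).const_mul c).congr (ae_of_all _ fun t ↦ ?_)
  simp only [log_exp, neg_neg, mul_div_cancel_left₀ t hc.ne', mul_one, mul_neg, abs_neg, abs_mul,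
    abs_exp, abs_of_pos hc, smul_eq_mul]
  ring

-- The substitution `v = exp (-(c * t))`.
theorem integral_negMulLog_pow_mul (g : ℝ → ℝ) {c : ℝ} (hc : 0 < c) (n : ℕ) :
    ∫ v in Icc 0 1, negMulLog v ^ n * g (-log v / c) =
      c ^ (n + 1) * laplace (fun t ↦ t ^ n * g t) ((n + 1) * c) := by
  rw [integral_Icc_eq_integral_Ioo, ← image_exp_neg_mul_Ioi hc,
    integral_image_eq_integral_abs_deriv_smul measurableSet_Ioi
      (fun t _ ↦ hasDerivWithinAt_exp_neg_mul c t _) (injective_exp_neg_mul hc).injOn,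
    laplace, ← integral_const_mul]
  congr 1 with t
  have hexp : exp (-((n + 1) * c * t)) = exp (-(c * t)) ^ n * exp (-(c * t)) := by
    rw [← pow_succ, ← exp_nat_mul]
    push_cast
    ring_nf
  simp only [negMulLog, log_exp, neg_neg, mul_div_cancel_left₀ t hc.ne', mul_one, mul_neg, neg_mul,
    abs_neg, abs_mul, abs_exp, abs_of_pos hc, smul_eq_mul, hexp]
  ring

-- After the substitution `v = exp (-(t / u))` the weights are the powers of `negMulLog` on
-- `[0, 1]`, whose unique maximum is at `exp (-1)`, that is, at `t = u`.
theorem LaplaceConvergent.tendsto_postWidder (hg : LaplaceConvergent g) (hu : 0 < u)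
    (hgu : ContinuousAt g u) :
    Tendsto (fun n : ℕ ↦ laplace (fun t ↦ t ^ n * g t) ((n + 1) * u⁻¹) /
      laplace (fun t ↦ t ^ n * 1) ((n + 1) * u⁻¹)) atTop (𝓝 (g u)) := by
  have hc : 0 < u⁻¹ := inv_pos.2 hu
  have hpeak : negMulLog (exp (-1)) = exp (-1) := by simp [negMulLog]
  have hvalue : -log (exp (-1)) / u⁻¹ = u := by simp
  have hmem : exp (-1) ∈ Ioo (0 : ℝ) 1 := ⟨exp_pos _, exp_lt_one_iff.2 (by norm_num)⟩
  have hcont : ContinuousAt (fun v ↦ g (-log v / u⁻¹)) (exp (-1)) :=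
    ContinuousAt.comp (g := g) (by rwa [hvalue])
      ((continuousAt_log (exp_ne_zero _)).neg.div_const _)
  have h := tendsto_setIntegral_pow_smul_of_unique_maximum_of_isCompact_of_integrableOn
    isCompact_Icc continuous_negMulLog.continuousOn
    (fun v hv hne ↦ (negMulLog_lt_exp_neg_one hv.1 hne).trans_eq hpeak.symm)
    (fun v hv ↦ negMulLog_nonneg hv.1 hv.2) (hpeak.symm ▸ exp_pos _)
    (by rw [interior_Icc]; exact subset_closure hmem)
    (hg.integrableOn_comp_neg_log_div hc) hcont.continuousWithinAt
  rw [hvalue] at h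
  refine h.congr fun n ↦ ?_
  have hweight := integral_negMulLog_pow_mul (fun _ ↦ 1) hc n
  simp only [mul_one] at hweight
  simp only [smul_eq_mul, mul_one]
  rw [integral_negMulLog_pow_mul g hc n, hweight, inv_mul_eq_div,
    mul_div_mul_left _ _ (pow_ne_zero _ hc.ne')]

end PostWidder

theorem CompletelyMonotonicOn.congr {f h : ℝ → ℝ} (hf : CompletelyMonotonicOn f)
    (hfh : EqOn f h (Ioi 0)) : CompletelyMonotonicOn h := by
  have heq : ∀ x > 0, f =ᶠ[𝓝 x] h := fun x hx ↦ hfh.eventuallyEq_of_mem (Ioi_mem_nhds hx)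
  refine ⟨fun x hx ↦ (hf.1 x hx).congr_of_eventuallyEq (heq x hx).symm, fun n x hx ↦ ?_⟩
  rw [← (heq x hx).iteratedDeriv_eq n]
  exact hf.2 n x hx

theorem LaplaceConvergent.completelyMonotonicOn_laplace_iff (hg : LaplaceConvergent g)
    (hgc : ContinuousOn g (Ioi 0)) :
    CompletelyMonotonicOn (laplace g) ↔ ∀ t > 0, 0 ≤ g t := by
  have hsign (n : ℕ) {x : ℝ} (hx : 0 < x) : (-1) ^ n * iteratedDeriv n (laplace g) x =
      laplace (fun t ↦ t ^ n * g t) x := by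
    rw [hg.iteratedDeriv_laplace n hx, ← mul_assoc, ← mul_pow, neg_one_mul, neg_neg, one_pow,
      one_mul]
  constructor
  · intro hcm t ht
    refine ge_of_tendsto' (hg.tendsto_postWidder ht (hgc.continuousAt (Ioi_mem_nhds ht)))
      fun n ↦ div_nonneg ?_ (laplace_nonneg (fun s hs ↦ by positivity) _)
    have hpos : 0 < (n + 1) * t⁻¹ := by positivity
    exact hsign n hpos ▸ hcm.2 n _ hpos
  · intro hnonneg
    refine ⟨fun x hx ↦ (contDiffOn_infty.2 hg.contDiffOn_laplace).contDiffAt (Ioi_mem_nhds hx),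
      fun n x hx ↦ ?_⟩
    rw [hsign n hx]
    exact laplace_nonneg (fun t ht ↦ mul_nonneg (pow_nonneg ht.le n) (hnonneg t ht)) x

theorem LaplaceConvergent.bernsteinOn_iff {f : ℝ → ℝ} (hg : LaplaceConvergent g)
    (hgc : ContinuousOn g (Ioi 0)) (hf₀ : ContinuousWithinAt f (Ici 0) 0)
    (hf : ∀ x > 0, HasDerivAt f (laplace g x) x) :
    BernsteinOn f ↔ (∀ t > 0, 0 ≤ g t) ∧ 0 ≤ f 0 := by
  have hderiv : EqOn (deriv f) (laplace g) (Ioi 0) := fun x hx ↦ (hf x hx).deriv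
  constructor
  · rintro ⟨hnonneg, hcm⟩
    refine ⟨(hg.completelyMonotonicOn_laplace_iff hgc).1 (hcm.congr hderiv), ?_⟩
    exact ge_of_tendsto (hf₀.mono Ioi_subset_Ici_self)
      (eventually_of_mem self_mem_nhdsWithin hnonneg)
  · rintro ⟨hnonneg, h₀⟩
    refine ⟨fun x hx ↦ ?_,
      ((hg.completelyMonotonicOn_laplace_iff hgc).2 hnonneg).congr hderiv.symm⟩
    have hcont : ContinuousOn f (Ici 0) := fun y hy ↦ by
      rcases eq_or_lt_of_le (mem_Ici.1 hy) with rfl | hy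
      · exact hf₀
      · exact (hf y hy).continuousAt.continuousWithinAt
    have hmono : MonotoneOn f (Ici 0) := by
      refine monotoneOn_of_hasDerivWithinAt_nonneg (convex_Ici 0) hcont (f' := laplace g)
        (fun y hy ↦ ?_) fun y _ ↦ laplace_nonneg hnonneg y
      rw [interior_Ici] at hy ⊢
      exact (hf y hy).hasDerivWithinAt
    exact h₀.trans (hmono self_mem_Ici hx.le hx.le)

end LaplaceTransform

section Digamma

open Set Filter Topology Real

variable {x y : ℝ}

/-- The digamma function `ψ` on the positive reals. -/
noncomputable def realDigamma : ℝ → ℝ :=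
  deriv fun y ↦ log (Gamma y)

theorem differentiableAt_log_Gamma (hy : 0 < y) :
    DifferentiableAt ℝ (fun y ↦ log (Gamma y)) y :=
  (differentiableOn_Gamma_Ioi.differentiableAt (Ioi_mem_nhds hy)).log (Gamma_pos_of_pos hy).ne'

theorem monotoneOn_realDigamma : MonotoneOn realDigamma (Ioi 0) :=
  convexOn_log_Gamma.monotoneOn_deriv fun _ ↦ differentiableAt_log_Gamma

theorem realDigamma_add_one (hy : 0 < y) : realDigamma (y + 1) = realDigamma y + y⁻¹ := by
  have heq : (fun z ↦ log (Gamma (z + 1))) =ᶠ[𝓝 y] fun z ↦ log (Gamma z) + log z := by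
    filter_upwards [Ioi_mem_nhds hy] with z (hz : 0 < z)
    rw [Gamma_add_one hz.ne', log_mul hz.ne' (Gamma_pos_of_pos hz).ne', add_comm]
  rw [realDigamma, ← deriv_comp_add_const (f := fun z ↦ log (Gamma z)), heq.deriv_eq]
  exact ((differentiableAt_log_Gamma hy).hasDerivAt.fun_add (hasDerivAt_log hy.ne')).deriv

theorem realDigamma_one : realDigamma 1 = -eulerMascheroniConstant := by
  simpa [realDigamma] using (hasDerivAt_Gamma_one.log (by simp)).deriv

-- The difference `u - v` is 1-periodic, and monotonicity bounds its oscillation on `[x + n, ∞)`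
-- by `h (x + n)`.
theorem sub_eq_sub_of_monotoneOn_of_add_one {u v h : ℝ → ℝ} (hu : MonotoneOn u (Ioi 0))
    (hv : MonotoneOn v (Ioi 0)) (hu₁ : ∀ x > 0, u (x + 1) = u x + h x)
    (hv₁ : ∀ x > 0, v (x + 1) = v x + h x) (hh : Tendsto h atTop (𝓝 0)) (hx : 0 < x)
    (hy : 0 < y) : u x - v x = u y - v y := by
  wlog hxy : x ≤ y generalizing x y
  · exact (this hy hx (le_of_not_ge hxy)).symm
  have periodic (n : ℕ) {z : ℝ} (hz : 0 < z) : u (z + n) - v (z + n) = u z - v z := by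
    induction n with
    | zero => simp
    | succ n ih =>
      rw [Nat.cast_succ, ← add_assoc, hu₁ _ (by positivity), hv₁ _ (by positivity), ← ih]
      ring
  obtain ⟨z, m, hxz, hzx, rfl⟩ : ∃ (z : ℝ) (m : ℕ), x ≤ z ∧ z ≤ x + 1 ∧ y = z + m :=
    ⟨y - ⌊y - x⌋₊, ⌊y - x⌋₊, by linarith [Nat.floor_le (sub_nonneg.2 hxy)],
      by linarith [Nat.lt_floor_add_one (y - x)], by ring⟩
  have hz : 0 < z := hx.trans_le hxz
  have hle (n : ℕ) : |(u z - v z) - (u x - v x)| ≤ h (x + n) := by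
    have hxn : 0 < x + n := by positivity
    have hzn : 0 < z + n := by positivity
    have hxn₁ : 0 < x + n + 1 := by positivity
    rw [← periodic n hz, ← periodic n hx, abs_le]
    have := hu hxn hzn (by linarith)
    have := hv hxn hzn (by linarith)
    have := hu₁ _ hxn ▸ hu hzn hxn₁ (by linarith)
    have := hv₁ _ hxn ▸ hv hzn hxn₁ (by linarith)
    constructor <;> linarith
  have hlim : Tendsto (fun n : ℕ ↦ h (x + n)) atTop (𝓝 0) :=
    hh.comp (tendsto_atTop_add_const_left _ x tendsto_natCast_atTop_atTop)
  rw [periodic m hz]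
  exact (sub_eq_zero.1 (abs_nonpos_iff.1 (ge_of_tendsto' hlim hle))).symm

theorem one_sub_exp_neg_pos {t : ℝ} (ht : 0 < t) : 0 < 1 - exp (-t) :=
  sub_pos.2 (exp_lt_one_iff.2 (neg_lt_zero.2 ht))

/-- The density `t / (1 - e⁻ᵗ)` whose Laplace transform is the trigamma function `ψ'`. -/
noncomputable def trigammaKernel (t : ℝ) : ℝ :=
  t * (1 - exp (-t))⁻¹

theorem continuousOn_trigammaKernel : ContinuousOn trigammaKernel (Ioi 0) :=
  continuousOn_id.mul
    (ContinuousOn.inv₀ (by fun_prop) fun _ ht ↦ (one_sub_exp_neg_pos ht).ne')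

theorem trigammaKernel_nonneg {t : ℝ} (ht : 0 < t) : 0 ≤ trigammaKernel t :=
  mul_nonneg ht.le (inv_nonneg.2 (one_sub_exp_neg_pos ht).le)

theorem trigammaKernel_le_one_add {t : ℝ} (ht : 0 < t) : trigammaKernel t ≤ 1 + t := by
  rw [trigammaKernel, ← div_eq_mul_inv, div_le_iff₀ (one_sub_exp_neg_pos ht)]
  have : (t + 1) * exp (-t) ≤ 1 := by
    rw [exp_neg, ← div_eq_mul_inv, div_le_one (exp_pos t)]
    exact add_one_le_exp t
  linarith

theorem laplaceConvergent_trigammaKernel : LaplaceConvergent trigammaKernel := by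
  refine (laplaceConvergent_one.add laplaceConvergent_one.id_mul).mono
    continuousOn_trigammaKernel fun t ht ↦ ?_
  rw [mul_one, abs_of_nonneg (trigammaKernel_nonneg ht)]
  exact trigammaKernel_le_one_add ht

/-- The integral `∫₀^∞ (e⁻ᵗ - e⁻ˣᵗ) / (1 - e⁻ᵗ) dt` of Gauss' formula for the digamma function. -/
noncomputable def gaussIntegral (x : ℝ) : ℝ :=
  ∫ t in Ioi 0, (exp (-t) - exp (-(x * t))) * (1 - exp (-t))⁻¹

theorem integrableOn_gaussIntegrand (hx : 0 < x) :
    IntegrableOn (fun t ↦ (exp (-t) - exp (-(x * t))) * (1 - exp (-t))⁻¹) (Ioi 0) := by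
  simpa only [one_mul] using
    laplaceConvergent_trigammaKernel.integrableOn_exp_sub_exp_mul one_pos hx

theorem hasDerivAt_gaussIntegral (hx : 0 < x) :
    HasDerivAt gaussIntegral (laplace trigammaKernel x) x := by
  have h := laplaceConvergent_trigammaKernel.hasDerivAt_integral_exp_sub_exp_mul one_pos hx
  simp only [one_mul] at h
  exact h

theorem monotoneOn_gaussIntegral : MonotoneOn gaussIntegral (Ioi 0) := fun x hx y hy hxy ↦ by
  refine setIntegral_mono_on (integrableOn_gaussIntegrand hx) (integrableOn_gaussIntegrand hy)
    measurableSet_Ioi fun t (ht : 0 < t) ↦ ?_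
  have := one_sub_exp_neg_pos ht
  gcongr

theorem gaussIntegral_add_one (hx : 0 < x) : gaussIntegral (x + 1) = gaussIntegral x + x⁻¹ := by
  rw [← sub_eq_iff_eq_add', gaussIntegral, gaussIntegral,
    ← integral_sub (integrableOn_gaussIntegrand (by positivity)) (integrableOn_gaussIntegrand hx)]
  calc _ = ∫ t in Ioi 0, exp (-(x * t)) := by
        refine setIntegral_congr_fun measurableSet_Ioi fun t ht ↦ ?_
        have hne := (one_sub_exp_neg_pos ht).ne'
        have hexp : exp (-((x + 1) * t)) = exp (-(x * t)) * exp (-t) := by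
          rw [← exp_add]
          ring_nf
        simp only [hexp]
        field_simp
        ring
    _ = x⁻¹ := by
        simp only [← neg_mul]
        rw [integral_exp_mul_Ioi (neg_lt_zero.2 hx), mul_zero, exp_zero, neg_div_neg_eq, one_div]

theorem realDigamma_eq_neg_eulerMascheroniConstant_add_gaussIntegral (hx : 0 < x) :
    realDigamma x = -eulerMascheroniConstant + gaussIntegral x := by
  have h := sub_eq_sub_of_monotoneOn_of_add_one monotoneOn_realDigamma monotoneOn_gaussIntegral
    (fun _ ↦ realDigamma_add_one) (fun _ ↦ gaussIntegral_add_one) tendsto_inv_atTop_zero hx one_pos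
  have hone : gaussIntegral 1 = 0 := by simp [gaussIntegral]
  rwa [hone, realDigamma_one, sub_zero, sub_eq_iff_eq_add] at h

theorem hasDerivAt_realDigamma (hx : 0 < x) :
    HasDerivAt realDigamma (laplace trigammaKernel x) x := by
  refine ((hasDerivAt_gaussIntegral hx).const_add
    (-eulerMascheroniConstant)).congr_of_eventuallyEq ?_
  filter_upwards [Ioi_mem_nhds hx] with y hy using
    realDigamma_eq_neg_eulerMascheroniConstant_add_gaussIntegral hy

/-- The density `u e^{-au/A} / (1 - e^{-u/A})`, whose Laplace transform is the derivative of
`x ↦ A ψ(A x + a)`. -/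
noncomputable def affineTrigammaKernel (A a u : ℝ) : ℝ :=
  u * (exp (-a * u / A) / (1 - exp (-u / A)))

variable {A a : ℝ}

theorem affineTrigammaKernel_eq (hA : A ≠ 0) (a : ℝ) :
    affineTrigammaKernel A a = fun u ↦ A * (exp (-a * u / A) * trigammaKernel (u / A)) := by
  ext u
  rw [affineTrigammaKernel, trigammaKernel, neg_div]
  field_simp

theorem laplaceConvergent_affineTrigammaKernel (hA : 0 < A) (ha : 0 ≤ a) :
    LaplaceConvergent (affineTrigammaKernel A a) := by
  rw [affineTrigammaKernel_eq hA.ne']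
  exact (laplaceConvergent_trigammaKernel.exp_mul_comp_div hA ha).const_mul A

theorem continuousOn_affineTrigammaKernel (hA : 0 < A) (a : ℝ) :
    ContinuousOn (affineTrigammaKernel A a) (Ioi 0) := by
  refine continuousOn_id.mul (ContinuousOn.div (by fun_prop) (by fun_prop) fun u hu ↦ ?_)
  rw [neg_div]
  exact (one_sub_exp_neg_pos (div_pos hu hA)).ne'

theorem hasDerivAt_mul_realDigamma_affine (hA : 0 < A) (hx : 0 < A * x + a) :
    HasDerivAt (fun x ↦ A * realDigamma (A * x + a)) (laplace (affineTrigammaKernel A a) x) x := by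
  have haffine : HasDerivAt (fun x ↦ A * x + a) (A * 1) x :=
    ((hasDerivAt_id x).const_mul A).add_const a
  refine (((hasDerivAt_realDigamma hx).comp x haffine).const_mul A).congr_deriv ?_
  rw [affineTrigammaKernel_eq hA.ne', laplace_const_mul, laplace_exp_mul_comp_div _ hA]
  ring

theorem stmt7_general {ι : Type*} [Fintype ι] (c A a : ι → ℝ) (hA : ∀ i, 0 < A i)
    (ha : ∀ i, 0 < a i) :
    BernsteinOn (fun x ↦ ∑ i, c i * (A i * realDigamma (A i * x + a i))) ↔
      (∀ u > 0, 0 ≤ ∑ i, c i * (exp (-a i * u / A i) / (1 - exp (-u / A i)))) ∧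
        0 ≤ ∑ i, c i * (A i * realDigamma (a i)) := by
  have hconv (i : ι) (_ : i ∈ Finset.univ) :
      LaplaceConvergent fun u ↦ c i * affineTrigammaKernel (A i) (a i) u :=
    (laplaceConvergent_affineTrigammaKernel (hA i) (ha i).le).const_mul (c i)
  have hcont : ContinuousOn (fun u ↦ ∑ i, c i * affineTrigammaKernel (A i) (a i) u) (Ioi 0) :=
    continuousOn_finsetSum _ fun i _ ↦
      continuousOn_const.mul (continuousOn_affineTrigammaKernel (hA i) (a i))
  have hderiv {x : ℝ} (hx : 0 ≤ x) :=
    HasDerivAt.fun_sum (u := Finset.univ) fun i _ ↦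
      (hasDerivAt_mul_realDigamma_affine (hA i)
        (add_pos_of_nonneg_of_pos (mul_nonneg (hA i).le hx) (ha i))).const_mul (c i)
  rw [(LaplaceConvergent.sum hconv).bernsteinOn_iff hcont
    (hderiv le_rfl).continuousAt.continuousWithinAt fun x hx ↦ by
      simpa only [laplace_sum hconv hx, laplace_const_mul] using hderiv hx.le]
  refine and_congr (forall₂_congr fun u hu ↦ ?_) (by simp only [mul_zero, zero_add])
  simp only [affineTrigammaKernel, mul_left_comm _ u, ← Finset.mul_sum,
    mul_nonneg_iff_of_pos_left hu]

end Digamma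

theorem stmt7 (p q : ℕ) (hp : 1 ≤ p) (hq : 1 ≤ q)
    (A : Fin p → ℝ) (B : Fin q → ℝ) (a : Fin p → ℝ) (b : Fin q → ℝ)
    (hA : ∀ i, 0 < A i) (hB : ∀ j, 0 < B j)
    (ha : ∀ i, 0 < a i) (hb : ∀ j, 0 < b j)
    (ψ : ℝ → ℝ) (hψ : ψ = deriv (fun y => Real.log (Real.Gamma y)))
    (P : ℝ → ℝ)
    (hP : ∀ u, P u = (∑ i, Real.exp (-a i * u / A i) / (1 - Real.exp (-u / A i))) -
      ∑ j, Real.exp (-b j * u / B j) / (1 - Real.exp (-u / B j))) :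
    BernsteinOn (fun x => (∑ i, A i * ψ (A i * x + a i)) - ∑ j, B j * ψ (B j * x + b j)) ↔
      ((∀ u > (0 : ℝ), 0 ≤ P u) ∧
        0 ≤ (∑ i, A i * ψ (a i)) - ∑ j, B j * ψ (b j)) := by
  obtain rfl : ψ = realDigamma := hψ
  simpa only [hP, Fintype.sum_sum_type, Sum.elim_inl, Sum.elim_inr, one_mul, neg_one_mul,
    Finset.sum_neg_distrib, ← sub_eq_add_neg] using
    stmt7_general (Sum.elim (fun _ ↦ 1) fun _ ↦ -1) (Sum.elim A B) (Sum.elim a b)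
      (Sum.rec hA hB) (Sum.rec ha hb)
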